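/- Let α ∈ (1,2), T > 0, L > 0, and let f : [0,T] × ℝ → ℝ be continuous with |f(t,x) − f(t,y)| ≤ L|x − y| for all t, x, y, and with f(t,0) = 0 for all t ∈ [0,T]. For t ∈ [0,T] define a₋(t) := inf{ f(τ,x)/x : τ ∈ [0,t], x ≠ 0 } and a*(t) := sup{ f(τ,x)/x : τ ∈ [0,t], x ≠ 0 }. Let y : [0,T] → ℝ be continuous with y(t) = y₀ + y₁ t + (1/Γ(α)) ∫₀ᵗ (t−s)^{α−1} f(s, y(s)) ds for all t, where y₀ ≥ 0 and y₁ ≥ 0. Suppose T* ∈ (0,T] is such that for all t ∈ [0,T*]: E_{α,α}(−L t^α) > 0, E_{α,2}(−L t^α) > 0, and (E_{α,1}(−L t^α) > 0 or y₀ = 0). Then for all t ∈ [0,T*]: y₀ E_{α,1}(a₋(t) t^α) + y₁ t E_{α,2}(a₋(t) t^α) ≤ y(t) ≤ y₀ E_{α,1}(a*(t) t^α) + y₁ t E_{α,2}(a*(t) t^α). -/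

import Mathlib

/-- The two-parameter Mittag-Leffler function `E_{α,β}(z) = ∑ₖ zᵏ / Γ(αk + β)`. -/
noncomputable def mlE (α β z : ℝ) : ℝ := ∑' k : ℕ, z ^ k / Real.Gamma (α * k + β)

open MeasureTheory intervalIntegral in
lemma beta_real {a b t : ℝ} (ha : 0 < a) (hb : 0 < b) (ht : 0 < t) :
    ∫ x in (0:ℝ)..t, x ^ (a - 1) * (t - x) ^ (b - 1)
      = t ^ (a + b - 1) * (Real.Gamma a * Real.Gamma b / Real.Gamma (a + b)) := by
  have h1 := Complex.betaIntegral_scaled (a : ℂ) (b : ℂ) ht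
  have h2 := Complex.betaIntegral_eq_Gamma_mul_div (a : ℂ) (b : ℂ) (by simpa) (by simpa)
  rw [h2] at h1
  have h3 : ∫ x in (0:ℝ)..t, (x : ℂ) ^ ((a:ℂ) - 1) * ((t : ℂ) - x) ^ ((b:ℂ) - 1)
      = ((∫ x in (0:ℝ)..t, x ^ (a - 1) * (t - x) ^ (b - 1) : ℝ) : ℂ) := by
    rw [← intervalIntegral.integral_ofReal]
    apply intervalIntegral.integral_congr
    intro x hx
    rw [Set.uIcc_of_le ht.le] at hx
    simp only
    rw [Complex.ofReal_mul, Complex.ofReal_cpow hx.1, Complex.ofReal_cpow (by linarith [hx.2])]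
    push_cast
    rfl
  rw [h3] at h1
  have h4 : (t : ℂ) ^ ((a : ℂ) + b - 1) = ((t ^ (a + b - 1) : ℝ) : ℂ) := by
    rw [Complex.ofReal_cpow ht.le]; push_cast; rfl
  rw [h4, Complex.Gamma_ofReal, Complex.Gamma_ofReal, ← Complex.ofReal_add,
    Complex.Gamma_ofReal] at h1
  exact_mod_cast h1

lemma ml_arg_pos {α β : ℝ} (hα : 1 ≤ α) (hβ : 1 ≤ β) (k : ℕ) : 0 < α * k + β := by
  have : 0 ≤ α * k := by positivity
  linarith

lemma ml_gamma_pos {α β : ℝ} (hα : 1 ≤ α) (hβ : 1 ≤ β) (k : ℕ) :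
    0 < Real.Gamma (α * k + β) := Real.Gamma_pos_of_pos (ml_arg_pos hα hβ k)

lemma ml_summable {α β : ℝ} (hα : 1 ≤ α) (hβ : 1 ≤ β) (z : ℝ) :
    Summable (fun k : ℕ => z ^ k / Real.Gamma (α * k + β)) := by
  rw [← summable_nat_add_iff 1]
  have h := (summable_nat_add_iff 1).2 (Real.summable_pow_div_factorial |z|)
  refine Summable.of_norm_bounded h ?_
  intro k
  have h1 : ((k + 1 : ℕ).factorial : ℝ) ≤ Real.Gamma (α * ((k + 1 : ℕ) : ℝ) + β) := by
    rw [← Real.Gamma_nat_eq_factorial]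
    apply Real.Gamma_strictMonoOn_Ici.monotoneOn
    · simp only [Set.mem_Ici]; push_cast; have : (0:ℝ) ≤ k := by positivity
      linarith
    · simp only [Set.mem_Ici]; push_cast; have : (0:ℝ) ≤ k := by positivity
      nlinarith
    · push_cast; have : (0:ℝ) ≤ k := by positivity
      nlinarith
  have h0 : (0:ℝ) < ((k + 1 : ℕ).factorial : ℝ) := by positivity
  rw [norm_div, norm_pow, Real.norm_eq_abs, Real.norm_eq_abs,
    abs_of_pos (h0.trans_le h1)]
  gcongr

lemma ml_split {α β : ℝ} (hα : 1 ≤ α) (hβ : 1 ≤ β) (z : ℝ) :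
    mlE α β z = 1 / Real.Gamma β + z * mlE α (α + β) z := by
  unfold mlE
  rw [(ml_summable hα hβ z).tsum_eq_zero_add, ← tsum_mul_left]
  congr 1
  · simp
  · apply tsum_congr
    intro k
    rw [show α * ((k + 1 : ℕ) : ℝ) + β = α * k + (α + β) by push_cast; ring]
    ring

lemma ml_continuous {α β : ℝ} (hα : 1 ≤ α) (hβ : 1 ≤ β) : Continuous (mlE α β) := by
  rw [continuous_iff_continuousAt]
  intro z
  have hc : ContinuousOn (mlE α β) (Metric.ball 0 (|z| + 1)) := by
    unfold mlE
    refine continuousOn_tsum (u := fun k : ℕ => (|z| + 1) ^ k / Real.Gamma (α * k + β)) ?_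
      (ml_summable hα hβ _) ?_
    · intro k; fun_prop
    · intro k x hx
      have hx' : |x| ≤ |z| + 1 := by
        rw [mem_ball_zero_iff, Real.norm_eq_abs] at hx; exact hx.le
      have := ml_gamma_pos hα hβ k
      rw [norm_div, norm_pow, Real.norm_eq_abs, Real.norm_eq_abs, abs_of_pos this]
      gcongr
  apply hc.continuousAt
  apply Metric.isOpen_ball.mem_nhds
  simp

lemma ml_nonneg {α β z : ℝ} (hα : 1 ≤ α) (hβ : 1 ≤ β) (hz : 0 ≤ z) : 0 ≤ mlE α β z := by
  apply tsum_nonneg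
  intro k
  have := ml_gamma_pos hα hβ k
  positivity

open MeasureTheory intervalIntegral in
lemma ml_conv {α β lam t : ℝ} (hα : 1 ≤ α) (hβ : 1 ≤ β) (ht : 0 ≤ t) :
    ∫ s in (0:ℝ)..t, (t - s) ^ (β - 1) * (s ^ (α - 1) * mlE α α (lam * s ^ α))
      = Real.Gamma β * t ^ (α + β - 1) * mlE α (α + β) (lam * t ^ α) := by
  rcases ht.eq_or_lt with rfl | ht0
  · rw [intervalIntegral.integral_same, Real.zero_rpow (by linarith)]; simp
  have hβg : 0 < Real.Gamma β := Real.Gamma_pos_of_pos (by linarith)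
  have key : HasSum (fun k : ℕ => ∫ s in (0:ℝ)..t,
        (t - s) ^ (β - 1) * (s ^ (α - 1) * ((lam * s ^ α) ^ k / Real.Gamma (α * k + α))))
      (∫ s in (0:ℝ)..t, (t - s) ^ (β - 1) * (s ^ (α - 1) * mlE α α (lam * s ^ α))) := by
    refine intervalIntegral.hasSum_integral_of_dominated_convergence
      (fun k _ => t ^ (β - 1) * (t ^ (α - 1) * ((|lam| * t ^ α) ^ k / Real.Gamma (α * k + α))))
      ?_ ?_ ?_ ?_ ?_
    · intro k
      apply Continuous.aestronglyMeasurable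
      have h1 : Continuous fun s : ℝ => (t - s) ^ (β - 1) :=
        (continuous_const.sub continuous_id).rpow_const (fun _ => Or.inr (by linarith))
      have h2 : Continuous fun s : ℝ => s ^ (α - 1) :=
        continuous_id.rpow_const (fun _ => Or.inr (by linarith))
      have h3 : Continuous fun s : ℝ => s ^ α :=
        continuous_id.rpow_const (fun _ => Or.inr (by linarith))
      exact h1.mul (h2.mul (((continuous_const.mul h3).pow k).div_const _))
    · intro k
      refine Filter.Eventually.of_forall ?_
      intro s hs
      rw [Set.uIoc_of_le ht] at hs
      have hg := ml_gamma_pos hα hα k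
      have hs0 := hs.1
      have hs1 := hs.2
      have hts : 0 ≤ t - s := by linarith
      rw [norm_mul, norm_mul, norm_div, norm_pow, norm_mul, Real.norm_of_nonneg (Real.rpow_nonneg hts _),
        Real.norm_of_nonneg (Real.rpow_nonneg hs0.le _), Real.norm_of_nonneg (Real.rpow_nonneg hs0.le _),
        Real.norm_of_nonneg hg.le, Real.norm_eq_abs]
      have e1 : (t - s) ^ (β - 1) ≤ t ^ (β - 1) :=
        Real.rpow_le_rpow hts (by linarith) (by linarith)
      have e2 : s ^ (α - 1) ≤ t ^ (α - 1) := Real.rpow_le_rpow hs0.le hs1 (by linarith)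
      have e3 : s ^ α ≤ t ^ α := Real.rpow_le_rpow hs0.le hs1 (by linarith)
      have p3 : 0 ≤ s ^ α := Real.rpow_nonneg hs0.le _
      gcongr
    · refine Filter.Eventually.of_forall ?_
      intro s _
      exact ((ml_summable hα hα _).mul_left _).mul_left _
    · exact intervalIntegrable_const
    · refine Filter.Eventually.of_forall ?_
      intro s _
      exact ((ml_summable hα hα _).hasSum.mul_left _).mul_left _
  rw [← key.tsum_eq, mlE, ← tsum_mul_left]
  apply tsum_congr
  intro k
  have hg := ml_gamma_pos hα hα k
  have hp := ml_arg_pos hα hα k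
  have : ∫ s in (0:ℝ)..t,
        (t - s) ^ (β - 1) * (s ^ (α - 1) * ((lam * s ^ α) ^ k / Real.Gamma (α * k + α)))
      = ∫ s in (0:ℝ)..t, (lam ^ k / Real.Gamma (α * k + α)) *
          (s ^ ((α * k + α) - 1) * (t - s) ^ (β - 1)) := by
    rw [intervalIntegral.integral_of_le ht, intervalIntegral.integral_of_le ht]
    apply setIntegral_congr_fun measurableSet_Ioc
    intro s hs
    simp only
    rw [show α * (k:ℝ) + α - 1 = α * k + (α - 1) by ring, Real.rpow_add hs.1, Real.rpow_mul hs.1.le,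
      Real.rpow_natCast, mul_pow]
    ring
  rw [this, intervalIntegral.integral_const_mul, beta_real hp (by linarith) ht0,
    show α * (k:ℝ) + α + β - 1 = α * k + (α + β - 1) by ring, Real.rpow_add ht0,
    Real.rpow_mul ht0.le, Real.rpow_natCast, mul_pow, add_assoc]
  field_simp

/-- The resolvent kernel. -/
noncomputable def mlK (α lam u : ℝ) : ℝ := u ^ (α - 1) * mlE α α (lam * u ^ α)

lemma mlK_continuous {α : ℝ} (hα : 1 ≤ α) (lam : ℝ) : Continuous (mlK α lam) := by
  unfold mlK
  have h2 : Continuous fun s : ℝ => s ^ (α - 1) :=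
    continuous_id.rpow_const (fun _ => Or.inr (by linarith))
  have h3 : Continuous fun s : ℝ => s ^ α :=
    continuous_id.rpow_const (fun _ => Or.inr (by linarith))
  exact h2.mul ((ml_continuous hα hα).comp (continuous_const.mul h3))

open MeasureTheory intervalIntegral in
lemma triangle_swap {K k F : ℝ → ℝ} (hK : Continuous K) (hk : Continuous k) (hF : Continuous F)
    (hk0 : k 0 = 0) {t : ℝ} (ht : 0 ≤ t) :
    ∫ s in (0:ℝ)..t, K (t - s) * ∫ r in (0:ℝ)..s, k (s - r) * F r
      = ∫ r in (0:ℝ)..t, F r * ∫ u in (0:ℝ)..(t - r), k (t - r - u) * K u := by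
  have hkp : Continuous fun u => k (max u 0) := hk.comp (continuous_id.max continuous_const)
  have e1 : ∫ s in (0:ℝ)..t, K (t - s) * ∫ r in (0:ℝ)..s, k (s - r) * F r
      = ∫ s in (0:ℝ)..t, ∫ r in (0:ℝ)..t, K (t - s) * (k (max (s - r) 0) * F r) := by
    apply integral_congr
    intro s hs
    rw [Set.uIcc_of_le ht] at hs
    simp only
    rw [intervalIntegral.integral_const_mul]
    congr 1
    have hint : ∀ a b : ℝ, IntervalIntegrable (fun r => k (max (s - r) 0) * F r) volume a b := by
      intro a b
      apply Continuous.intervalIntegrable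
      exact (hkp.comp (continuous_const.sub continuous_id)).mul hF
    rw [← integral_add_adjacent_intervals (hint 0 s) (hint s t)]
    have z : ∫ r in s..t, k (max (s - r) 0) * F r = 0 := by
      refine (integral_congr (g := fun _ => (0:ℝ)) ?_).trans intervalIntegral.integral_zero
      intro r hr
      rw [Set.uIcc_of_le hs.2] at hr
      simp only
      rw [max_eq_right (by linarith [hr.1]), hk0, zero_mul]
    rw [z, add_zero]
    apply integral_congr
    intro r hr
    rw [Set.uIcc_of_le hs.1] at hr
    simp only
    rw [max_eq_left (by linarith [hr.2])]
  rw [e1, intervalIntegral_intervalIntegral_swap]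
  · apply integral_congr
    intro r hr
    rw [Set.uIcc_of_le ht] at hr
    simp only
    have : ∀ s, K (t - s) * (k (max (s - r) 0) * F r) = F r * (K (t - s) * k (max (s - r) 0)) := by
      intro s; ring
    simp_rw [this]
    rw [intervalIntegral.integral_const_mul]
    congr 1
    have hint : ∀ a b : ℝ, IntervalIntegrable (fun s => K (t - s) * k (max (s - r) 0)) volume a b := by
      intro a b
      apply Continuous.intervalIntegrable
      exact (hK.comp (continuous_const.sub continuous_id)).mul
        (hkp.comp (continuous_id.sub continuous_const))
    rw [← integral_add_adjacent_intervals (hint 0 r) (hint r t)]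
    have z : ∫ s in (0:ℝ)..r, K (t - s) * k (max (s - r) 0) = 0 := by
      refine (integral_congr (g := fun _ => (0:ℝ)) ?_).trans intervalIntegral.integral_zero
      intro s hs
      rw [Set.uIcc_of_le hr.1] at hs
      simp only
      rw [max_eq_right (by linarith [hs.2]), hk0, mul_zero]
    rw [z, zero_add]
    have h := intervalIntegral.integral_comp_sub_left (a := r) (b := t)
      (fun u => k (t - r - u) * K u) t
    rw [sub_self] at h
    rw [← h]
    apply integral_congr
    intro s hs
    rw [Set.uIcc_of_le hr.2] at hs
    simp only
    rw [max_eq_left (by linarith [hs.1]), show t - r - (t - s) = s - r by ring, mul_comm]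
  · have hc : Continuous (Function.uncurry fun s r : ℝ => K (t - s) * (k (max (s - r) 0) * F r)) := by
      unfold Function.uncurry
      exact (hK.comp (continuous_const.sub continuous_fst)).mul
        ((hkp.comp (continuous_fst.sub continuous_snd)).mul (hF.comp continuous_snd))
    refine (hc.continuousOn.integrableOn_compact
      (isCompact_uIcc.prod isCompact_uIcc) : IntegrableOn _ (Set.uIcc 0 t ×ˢ Set.uIcc 0 t) _).mono_set ?_
    exact Set.prod_mono Set.uIoc_subset_uIcc Set.uIoc_subset_uIcc

open MeasureTheory intervalIntegral in
lemma var_const {α lam y₀ y₁ t : ℝ} (hα : 1 < α) {y F : ℝ → ℝ} (hyc : Continuous y)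
    (hF : Continuous F) (ht : 0 ≤ t)
    (hy : ∀ s ∈ Set.Icc (0:ℝ) t, y s = y₀ + y₁ * s
        + (1 / Real.Gamma α) * ∫ r in (0 : ℝ)..s, (s - r) ^ (α - 1) * F r) :
    y t = y₀ * mlE α 1 (lam * t ^ α) + y₁ * (t * mlE α 2 (lam * t ^ α))
      + ∫ s in (0:ℝ)..t, mlK α lam (t - s) * (F s - lam * y s) := by
  have hα' := hα.le
  have hK := mlK_continuous hα' lam
  have hKt : Continuous fun s => mlK α lam (t - s) := hK.comp (continuous_const.sub continuous_id)
  have hg : 0 < Real.Gamma α := Real.Gamma_pos_of_pos (by linarith)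
  have hk : Continuous fun s : ℝ => s ^ (α - 1) :=
    continuous_id.rpow_const (fun _ => Or.inr (by linarith))
  have hkt : Continuous fun s : ℝ => (t - s) ^ (α - 1) := hk.comp (continuous_const.sub continuous_id)
  have hta : t * t ^ α = t ^ (α + 1) := by
    rw [Real.rpow_add_one' ht (by linarith)]; ring
  -- moments of the kernel
  have m0 : ∫ s in (0:ℝ)..t, mlK α lam (t - s) = t ^ α * mlE α (α + 1) (lam * t ^ α) := by
    have h := ml_conv (β := 1) (lam := lam) hα' le_rfl ht
    rw [intervalIntegral.integral_comp_sub_left (fun u => mlK α lam u) t]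
    simpa [mlK] using h
  have m1 : ∫ s in (0:ℝ)..t, mlK α lam (t - s) * s
      = t ^ (α + 1) * mlE α (α + 2) (lam * t ^ α) := by
    have h := ml_conv (β := 2) (lam := lam) hα' one_le_two ht
    have h' := intervalIntegral.integral_comp_sub_left (a := 0) (b := t)
      (fun u => (t - u) * mlK α lam u) t
    rw [sub_self, sub_zero] at h'
    rw [show α + 2 - 1 = α + 1 by ring, show (2:ℝ) - 1 = 1 by norm_num, Real.Gamma_two] at h
    simp only [Real.rpow_one, one_mul] at h
    rw [← h]
    unfold mlK at h' ⊢
    rw [← h']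
    apply integral_congr
    intro s _
    simp only
    ring
  have hsw := triangle_swap hK hk hF (Real.zero_rpow (by linarith)) ht
  have inner : ∀ u : ℝ, 0 ≤ u → lam * ∫ v in (0:ℝ)..u, (u - v) ^ (α - 1) * mlK α lam v
      = Real.Gamma α * mlK α lam u - u ^ (α - 1) := by
    intro u hu
    unfold mlK
    rw [ml_conv hα' hα' hu, ml_split hα' hα' (lam * u ^ α)]
    rw [show α + α - 1 = (α - 1) + α by ring, Real.rpow_add_of_nonneg hu (by linarith) (by linarith)]
    field_simp
    ring
  have hA : lam * ∫ s in (0:ℝ)..t, mlK α lam (t - s) * y s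
      = y₀ * (lam * (t ^ α * mlE α (α + 1) (lam * t ^ α)))
        + y₁ * (lam * (t ^ (α + 1) * mlE α (α + 2) (lam * t ^ α)))
        + ((∫ s in (0:ℝ)..t, mlK α lam (t - s) * F s)
          - (1 / Real.Gamma α) * ∫ s in (0:ℝ)..t, (t - s) ^ (α - 1) * F s) := by
    have s1 : ∫ s in (0:ℝ)..t, mlK α lam (t - s) * (y s - (y₀ + y₁ * s))
        = (1 / Real.Gamma α) * ∫ s in (0:ℝ)..t, mlK α lam (t - s) *
          ∫ r in (0:ℝ)..s, (s - r) ^ (α - 1) * F r := by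
      rw [← intervalIntegral.integral_const_mul]
      apply integral_congr
      intro s hs
      rw [Set.uIcc_of_le ht] at hs
      simp only
      rw [hy s hs]
      ring
    have s2 : ∫ s in (0:ℝ)..t, mlK α lam (t - s) * (y s - (y₀ + y₁ * s))
        = (∫ s in (0:ℝ)..t, mlK α lam (t - s) * y s) -
          (y₀ * (∫ s in (0:ℝ)..t, mlK α lam (t - s))
            + y₁ * ∫ s in (0:ℝ)..t, mlK α lam (t - s) * s) := by
      rw [← intervalIntegral.integral_const_mul, ← intervalIntegral.integral_const_mul,
        ← intervalIntegral.integral_add, ← intervalIntegral.integral_sub]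
      · apply integral_congr
        intro s _
        simp only
        ring
      all_goals
        apply Continuous.intervalIntegrable
        fun_prop
    have s3 : lam * ∫ r in (0:ℝ)..t, F r * ∫ u in (0:ℝ)..(t - r), (t - r - u) ^ (α - 1) * mlK α lam u
        = Real.Gamma α * (∫ s in (0:ℝ)..t, mlK α lam (t - s) * F s)
          - ∫ s in (0:ℝ)..t, (t - s) ^ (α - 1) * F s := by
      rw [← intervalIntegral.integral_const_mul, ← intervalIntegral.integral_const_mul,
        ← intervalIntegral.integral_sub]
      · apply integral_congr
        intro r hr
        rw [Set.uIcc_of_le ht] at hr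
        simp only
        have := inner (t - r) (by linarith [hr.2])
        linear_combination F r * this
      all_goals
        apply Continuous.intervalIntegrable
        fun_prop
    rw [m0, m1, s1, hsw] at s2
    have s4 : (∫ s in (0:ℝ)..t, mlK α lam (t - s) * F s)
          - (1 / Real.Gamma α) * ∫ s in (0:ℝ)..t, (t - s) ^ (α - 1) * F s
        = (1 / Real.Gamma α) * (lam * ∫ r in (0:ℝ)..t, F r * ∫ u in (0:ℝ)..(t - r),
            (t - r - u) ^ (α - 1) * mlK α lam u) := by
      rw [s3]; field_simp
    rw [s4]
    linear_combination -lam * s2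
  have hsub : ∫ s in (0:ℝ)..t, mlK α lam (t - s) * (F s - lam * y s)
      = (∫ s in (0:ℝ)..t, mlK α lam (t - s) * F s)
        - lam * ∫ s in (0:ℝ)..t, mlK α lam (t - s) * y s := by
    rw [← intervalIntegral.integral_const_mul, ← intervalIntegral.integral_sub]
    · apply integral_congr
      intro s _
      simp only
      ring
    all_goals
      apply Continuous.intervalIntegrable
      fun_prop
  rw [hsub, hA, hy t ⟨ht, le_rfl⟩, ml_split hα' le_rfl, ml_split hα' one_le_two, Real.Gamma_one,
    Real.Gamma_two, ← hta]
  ring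

open MeasureTheory intervalIntegral in
lemma gronwall_zero {w : ℝ → ℝ} {C b : ℝ} (hw : Continuous w) (hw0 : ∀ t, 0 ≤ w t)
    (h : ∀ t ∈ Set.Icc (0:ℝ) b, w t ≤ C * ∫ s in (0:ℝ)..t, w s) :
    ∀ t ∈ Set.Icc (0:ℝ) b, w t = 0 := by
  have hd : ∀ t, HasDerivAt (fun t => ∫ s in (0:ℝ)..t, w s) (w t) t := fun t =>
    intervalIntegral.integral_hasDerivAt_right (hw.intervalIntegrable _ _)
      (hw.stronglyMeasurableAtFilter _ _) hw.continuousAt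
  have := eq_zero_of_abs_deriv_le_mul_abs_self_of_eq_zero_right
    (f := fun t => ∫ s in (0:ℝ)..t, w s) (f' := w) (K := C) (a := 0) (b := b)
    (fun t _ => (hd t).continuousAt.continuousWithinAt) (fun t _ => (hd t).hasDerivWithinAt)
    (by simp) (by
      intro t ht
      have hn : 0 ≤ ∫ s in (0:ℝ)..t, w s :=
        intervalIntegral.integral_nonneg ht.1 (fun s _ => hw0 s)
      rw [Real.norm_of_nonneg (hw0 t), Real.norm_of_nonneg hn]
      exact h t ⟨ht.1, ht.2.le⟩)
  intro t ht
  have h1 := h t ht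
  rw [this t ht, mul_zero] at h1
  exact le_antisymm h1 (hw0 t)

/-- Nonlinear separation bounds for nonnegative initial data, under the
assumption `f(t,0) = 0` (Theorem 2.11(a) of the paper). -/
theorem nonlinear_bounds_nonneg_data
    (α T Tstar L y₀ y₁ : ℝ) (hα₁ : 1 < α) (hα₂ : α < 2) (hT : 0 < T) (hL : 0 < L)
    (f : ℝ → ℝ → ℝ)
    (hf_cont : ContinuousOn (fun p : ℝ × ℝ => f p.1 p.2) (Set.Icc 0 T ×ˢ Set.univ))
    (hf_lip : ∀ t ∈ Set.Icc (0 : ℝ) T, ∀ x z : ℝ, |f t x - f t z| ≤ L * |x - z|)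
    (hf0 : ∀ t ∈ Set.Icc (0 : ℝ) T, f t 0 = 0)
    (alow astar : ℝ → ℝ)
    (halow : ∀ t ∈ Set.Icc (0 : ℝ) T,
      alow t = sInf {r : ℝ | ∃ τ ∈ Set.Icc (0 : ℝ) t, ∃ x : ℝ, x ≠ 0 ∧ r = f τ x / x})
    (hastar : ∀ t ∈ Set.Icc (0 : ℝ) T,
      astar t = sSup {r : ℝ | ∃ τ ∈ Set.Icc (0 : ℝ) t, ∃ x : ℝ, x ≠ 0 ∧ r = f τ x / x})
    (y : ℝ → ℝ) (hy_cont : ContinuousOn y (Set.Icc 0 T))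
    (hy : ∀ t ∈ Set.Icc (0 : ℝ) T,
      y t = y₀ + y₁ * t
        + (1 / Real.Gamma α) * ∫ s in (0 : ℝ)..t, (t - s) ^ (α - 1) * f s (y s))
    (hy₀ : 0 ≤ y₀) (hy₁ : 0 ≤ y₁)
    (hTstar : 0 < Tstar) (hTstarT : Tstar ≤ T)
    (hcond : ∀ t ∈ Set.Icc (0 : ℝ) Tstar,
      mlE α α (-(L * t ^ α)) > 0 ∧ mlE α 2 (-(L * t ^ α)) > 0 ∧
        (mlE α 1 (-(L * t ^ α)) > 0 ∨ y₀ = 0)) :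
    ∀ t ∈ Set.Icc (0 : ℝ) Tstar,
      y₀ * mlE α 1 (alow t * t ^ α) + y₁ * (t * mlE α 2 (alow t * t ^ α)) ≤ y t ∧
        y t ≤ y₀ * mlE α 1 (astar t * t ^ α) + y₁ * (t * mlE α 2 (astar t * t ^ α)) := by
  have hα := hα₁.le
  have hG : ContinuousOn (fun s => f s (y s)) (Set.Icc 0 T) := by
    have := hf_cont.comp (continuousOn_id.prodMk hy_cont) (fun s hs => ⟨hs, Set.mem_univ _⟩)
    exact this
  obtain ⟨Y, hYc, hY⟩ : ∃ Y : ℝ → ℝ, Continuous Y ∧ ∀ s ∈ Set.Icc 0 T, Y s = y s :=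
    ⟨Set.IccExtend hT.le ((Set.Icc 0 T).domRestrict y),
      (continuousOn_iff_continuous_domRestrict.1 hy_cont).Icc_extend',
      fun s hs => by rw [Set.IccExtend_of_mem _ _ hs]; rfl⟩
  obtain ⟨F, hFc, hF⟩ : ∃ F : ℝ → ℝ, Continuous F ∧ ∀ s ∈ Set.Icc 0 T, F s = f s (y s) :=
    ⟨Set.IccExtend hT.le ((Set.Icc 0 T).domRestrict (fun s => f s (y s))),
      (continuousOn_iff_continuous_domRestrict.1 hG).Icc_extend',
      fun s hs => by rw [Set.IccExtend_of_mem _ _ hs]; rfl⟩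
  have hvol : ∀ s ∈ Set.Icc 0 T, Y s = y₀ + y₁ * s
        + (1 / Real.Gamma α) * ∫ r in (0 : ℝ)..s, (s - r) ^ (α - 1) * F r := by
    intro s hs
    rw [hY s hs, hy s hs]
    congr 2
    apply intervalIntegral.integral_congr
    intro r hr
    rw [Set.uIcc_of_le hs.1] at hr
    simp only
    rw [hF r ⟨hr.1, hr.2.trans hs.2⟩]
  have hvc : ∀ lam : ℝ, ∀ t ∈ Set.Icc 0 T,
      Y t = y₀ * mlE α 1 (lam * t ^ α) + y₁ * (t * mlE α 2 (lam * t ^ α))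
      + ∫ s in (0:ℝ)..t, mlK α lam (t - s) * (F s - lam * Y s) := by
    intro lam t ht
    exact var_const hα₁ hYc hFc ht.1 (fun s hs => hvol s ⟨hs.1, hs.2.trans ht.2⟩)
  -- positivity of the kernels
  have hKpos : ∀ lam : ℝ, -L ≤ lam → ∀ u ∈ Set.Icc 0 Tstar, 0 ≤ mlK α lam u := by
    intro lam hlam u hu
    refine mul_nonneg (Real.rpow_nonneg hu.1 _) ?_
    have hu' : 0 ≤ u ^ α := Real.rpow_nonneg hu.1 _
    rcases le_or_gt 0 lam with h | h
    · exact ml_nonneg hα hα (mul_nonneg h hu')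
    · have h1 : 0 ≤ -lam / L := div_nonneg (by linarith) hL.le
      have h2 : -lam / L ≤ 1 := by rw [div_le_one hL]; linarith
      have hα0 : α ≠ 0 := by linarith
      have hv0 : 0 ≤ (-lam / L) ^ (1 / α) := Real.rpow_nonneg h1 _
      have hv1 : (-lam / L) ^ (1 / α) ≤ 1 := Real.rpow_le_one h1 h2 (by positivity)
      have h3 := (hcond ((-lam / L) ^ (1 / α) * u) ⟨mul_nonneg hv0 hu.1,
        (mul_le_of_le_one_left hu.1 hv1).trans hu.2⟩).1
      rw [Real.mul_rpow hv0 hu.1, ← Real.rpow_mul h1, one_div_mul_cancel hα0, Real.rpow_one] at h3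
      rw [show lam * u ^ α = -(L * (-lam / L * u ^ α)) by field_simp; ]
      exact h3.le
  have hflip : ∀ s ∈ Set.Icc 0 T, ∀ x, |f s x| ≤ L * |x| := by
    intro s hs x
    have := hf_lip s hs x 0
    rwa [hf0 s hs, sub_zero, sub_zero] at this
  -- nonnegativity of the solution
  have hYnn : ∀ t ∈ Set.Icc 0 Tstar, 0 ≤ Y t := by
    have hKc := mlK_continuous hα (-L)
    obtain ⟨M, hM⟩ := (isCompact_Icc (a := (0:ℝ)) (b := Tstar)).exists_bound_of_continuousOn
      hKc.continuousOn
    have hM' : ∀ u ∈ Set.Icc 0 Tstar, mlK α (-L) u ≤ M := fun u hu =>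
      (le_abs_self _).trans (hM u hu)
    have hwc : Continuous fun s => max (-Y s) 0 := hYc.neg.max continuous_const
    have hz := gronwall_zero (w := fun s => max (-Y s) 0) (C := 2 * L * M) (b := Tstar)
      hwc (fun s => le_max_right _ _) ?_
    · intro t ht
      have := hz t ht
      have h2 := le_max_left (-Y t) 0
      linarith
    intro t ht
    have hM0 : 0 ≤ M := (norm_nonneg _).trans (hM t ht)
    have hi : 0 ≤ ∫ s in (0:ℝ)..t, max (-Y s) 0 :=
      intervalIntegral.integral_nonneg ht.1 (fun s _ => le_max_right _ _)
    apply max_le _ (by positivity)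
    have hh : 0 ≤ y₀ * mlE α 1 (-L * t ^ α) + y₁ * (t * mlE α 2 (-L * t ^ α)) := by
      obtain ⟨_, h2, h3⟩ := hcond t ht
      rw [← neg_mul] at h2 h3
      have ht0 := ht.1
      have e2 : 0 ≤ y₁ * (t * mlE α 2 (-L * t ^ α)) := mul_nonneg hy₁ (mul_nonneg ht0 h2.le)
      have e1 : 0 ≤ y₀ * mlE α 1 (-L * t ^ α) := by
        rcases h3 with h3 | h3
        · exact mul_nonneg hy₀ h3.le
        · simp [h3]
      linarith
    have hv := hvc (-L) t ⟨ht.1, ht.2.trans hTstarT⟩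
    have hcmp : ∫ s in (0:ℝ)..t, -(2 * L * M) * max (-Y s) 0
        ≤ ∫ s in (0:ℝ)..t, mlK α (-L) (t - s) * (F s - -L * Y s) := by
      apply intervalIntegral.integral_mono_on ht.1
      · exact (continuous_const.mul hwc).intervalIntegrable _ _
      · apply Continuous.intervalIntegrable
        exact (hKc.comp (continuous_const.sub continuous_id)).mul
          (hFc.sub (continuous_const.mul hYc))
      · intro s hs
        have hsT : s ∈ Set.Icc 0 T := ⟨hs.1, hs.2.trans (ht.2.trans hTstarT)⟩
        have hts : t - s ∈ Set.Icc 0 Tstar := ⟨by linarith [hs.2], by linarith [hs.1, ht.2]⟩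
        have k0 := hKpos (-L) le_rfl _ hts
        have k1 := hM' _ hts
        have hb := hflip s hsT (Y s)
        rw [hF s hsT, ← hY s hsT]
        set w := max (-Y s) 0 with hw
        have hw0 : 0 ≤ w := le_max_right _ _
        have hlow : -(2 * L) * w ≤ f s (Y s) - -L * Y s := by
          have := neg_le_of_abs_le hb
          rcases le_or_gt 0 (Y s) with h | h
          · rw [abs_of_nonneg h] at this
            nlinarith
          · rw [abs_of_neg h] at this
            have : w = -Y s := max_eq_left (by linarith)
            rw [this]; linarith
        calc -(2 * L * M) * w = M * (-(2 * L) * w) := by ring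
          _ ≤ mlK α (-L) (t - s) * (-(2 * L) * w) :=
            mul_le_mul_of_nonpos_right k1 (by nlinarith)
          _ ≤ _ := mul_le_mul_of_nonneg_left hlow k0
    rw [intervalIntegral.integral_const_mul] at hcmp
    linarith
  intro t ht
  have htT : t ∈ Set.Icc 0 T := ⟨ht.1, ht.2.trans hTstarT⟩
  have hbd : ∀ r ∈ {r : ℝ | ∃ τ ∈ Set.Icc (0 : ℝ) t, ∃ x : ℝ, x ≠ 0 ∧ r = f τ x / x},
      -L ≤ r ∧ r ≤ L := by
    rintro r ⟨τ, hτ, x, hx, rfl⟩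
    have h := hflip τ ⟨hτ.1, hτ.2.trans htT.2⟩ x
    have : |f τ x / x| ≤ L := by
      rw [abs_div, div_le_iff₀ (abs_pos.2 hx)]; exact h
    exact abs_le.1 this
  have hne : ({r : ℝ | ∃ τ ∈ Set.Icc (0 : ℝ) t, ∃ x : ℝ, x ≠ 0 ∧ r = f τ x / x}).Nonempty :=
    ⟨f 0 1 / 1, 0, ⟨le_rfl, ht.1⟩, 1, one_ne_zero, rfl⟩
  have hbb : BddBelow {r : ℝ | ∃ τ ∈ Set.Icc (0 : ℝ) t, ∃ x : ℝ, x ≠ 0 ∧ r = f τ x / x} :=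
    ⟨-L, fun r hr => (hbd r hr).1⟩
  have hba : BddAbove {r : ℝ | ∃ τ ∈ Set.Icc (0 : ℝ) t, ∃ x : ℝ, x ≠ 0 ∧ r = f τ x / x} :=
    ⟨L, fun r hr => (hbd r hr).2⟩
  have hal : -L ≤ alow t := by
    rw [halow t htT]; exact le_csInf hne (fun r hr => (hbd r hr).1)
  have has : -L ≤ astar t := by
    rw [hastar t htT]
    obtain ⟨r, hr⟩ := hne
    exact (hbd r hr).1.trans (le_csSup hba hr)
  have hsand : ∀ s ∈ Set.Icc 0 t, alow t * Y s ≤ F s ∧ F s ≤ astar t * Y s := by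
    intro s hs
    have hsT : s ∈ Set.Icc 0 T := ⟨hs.1, hs.2.trans htT.2⟩
    have hn := hYnn s ⟨hs.1, hs.2.trans ht.2⟩
    rw [hF s hsT, ← hY s hsT]
    rcases hn.eq_or_lt with h | h
    · rw [← h, hf0 s hsT]; simp
    · have hm : f s (Y s) / Y s ∈
          {r : ℝ | ∃ τ ∈ Set.Icc (0 : ℝ) t, ∃ x : ℝ, x ≠ 0 ∧ r = f τ x / x} :=
        ⟨s, hs, Y s, h.ne', rfl⟩
      have h1 := csInf_le hbb hm
      have h2 := le_csSup hba hm
      rw [← halow t htT, le_div_iff₀ h] at h1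
      rw [← hastar t htT, div_le_iff₀ h] at h2
      exact ⟨h1, h2⟩
  have hts : ∀ s ∈ Set.Icc 0 t, t - s ∈ Set.Icc 0 Tstar := fun s hs =>
    ⟨by linarith [hs.2], by linarith [hs.1, ht.2]⟩
  rw [← hY t htT]
  constructor
  · rw [hvc (alow t) t htT]
    have : 0 ≤ ∫ s in (0:ℝ)..t, mlK α (alow t) (t - s) * (F s - alow t * Y s) := by
      apply intervalIntegral.integral_nonneg ht.1
      intro s hs
      exact mul_nonneg (hKpos _ hal _ (hts s hs)) (by linarith [(hsand s hs).1])
    linarith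
  · rw [hvc (astar t) t htT]
    have : 0 ≤ ∫ s in (0:ℝ)..t, -(mlK α (astar t) (t - s) * (F s - astar t * Y s)) := by
      apply intervalIntegral.integral_nonneg ht.1
      intro s hs
      rw [← mul_neg]
      exact mul_nonneg (hKpos _ has _ (hts s hs)) (by linarith [(hsand s hs).2])
    rw [intervalIntegral.integral_neg] at this
    linarith
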